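/- Let γ: ℝ/ℤ → ℝ³ be a C² embedding (injective with nowhere-vanishing derivative), c ∈ ℝ³ a point not in the image of γ, and r > 0. Then E(I_{c,r} ∘ γ) = E(γ), where I_{c,r} is the inversion in the sphere of center c and radius r. (Möbius invariance of the energy E⁽²⁾, Freedman–He–Wang.) -/

import Mathlib

open MeasureTheory

noncomputable section

/-- ℝ³ with the Euclidean norm. -/
abbrev E3 := EuclideanSpace ℝ (Fin 3)

/-- Inversion in the sphere of center `c` and radius `r`. -/
def inv3 (c : E3) (r : ℝ) (x : E3) : E3 := c + (r ^ 2 / ‖x - c‖ ^ 2) • (x - c)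

/-- The arc length of `γ` between the parameters `s` and `t`. -/
def arcLen (γ : ℝ → E3) (s t : ℝ) : ℝ := |∫ u in s..t, ‖deriv γ u‖|

/-- The shorter arc-length distance along the closed curve `γ` (of period 1)
between the points with parameters `s, t ∈ [0,1]`. -/
def dArc (γ : ℝ → E3) (s t : ℝ) : ℝ :=
  min (arcLen γ s t) ((∫ u in (0:ℝ)..1, ‖deriv γ u‖) - arcLen γ s t)

/-- O'Hara's energy `E = E⁽²⁾` of a closed curve `γ : ℝ/ℤ → ℝ³`. -/
def energy (γ : ℝ → E3) : ℝ :=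
  ∫ p in Set.Icc (0:ℝ) 1 ×ˢ Set.Icc (0:ℝ) 1,
    (1 / ‖γ p.1 - γ p.2‖ ^ 2 - 1 / dArc γ p.1 p.2 ^ 2) *
      (‖deriv γ p.1‖ * ‖deriv γ p.2‖)

/-! ### One-dimensional kernel -/

open Filter Topology Set

/-- Primitive of `1 / min x (L - x) ^ 2` on `(0, L)`. -/
def primP (L x : ℝ) : ℝ := -1 / min x (L / 2) + 1 / min (L - x) (L / 2) - 2 / L

lemma primP_add (L x : ℝ) : primP L x + primP L (L - x) = -4 / L := by
  unfold primP
  rw [sub_sub_cancel]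
  ring

lemma primP_left {L x : ℝ} (hx : x ≤ L / 2) : primP L x = -1 / x := by
  unfold primP
  rw [min_eq_left hx, min_eq_right (by linarith)]
  rw [one_div_div]; ring

lemma primP_right {L x : ℝ} (hx : L / 2 ≤ x) : primP L x = 1 / (L - x) - 4 / L := by
  unfold primP
  rw [min_eq_right hx, min_eq_left (by linarith)]
  rw [neg_div, one_div_div]; ring

lemma primP_hasDerivAt {L x : ℝ} (hx0 : 0 < x) (hxL : x < L) :
    HasDerivAt (primP L) (1 / (min x (L - x)) ^ 2) x := by
  have h1 : x ≤ L / 2 → HasDerivWithinAt (primP L) (1 / (min x (L - x)) ^ 2) (Iic (L / 2)) x := by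
    intro hx
    have : HasDerivAt (fun y : ℝ => -1 / y) (1 / (min x (L - x)) ^ 2) x := by
      rw [min_eq_left (by linarith)]
      have := ((hasDerivAt_inv hx0.ne').const_mul (-1))
      convert! this using 1
      field_simp
    exact this.hasDerivWithinAt.congr (fun y hy => primP_left hy) (primP_left hx)
  have h2 : L / 2 ≤ x → HasDerivWithinAt (primP L) (1 / (min x (L - x)) ^ 2) (Ici (L / 2)) x := by
    intro hx
    have : HasDerivAt (fun y : ℝ => 1 / (L - y) - 4 / L) (1 / (min x (L - x)) ^ 2) x := by
      rw [min_eq_right (by linarith)]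
      have h0 : L - x ≠ 0 := by linarith
      have := (((hasDerivAt_id x).const_sub L).inv h0).sub_const (4 / L)
      convert! this using 1
      · ext y; simp
      · simp
    exact this.hasDerivWithinAt.congr (fun y hy => primP_right hy) (primP_right hx)
  rcases lt_trichotomy x (L / 2) with h | h | h
  · exact (h1 h.le).hasDerivAt (Iic_mem_nhds h)
  · have := (h1 h.le).union (h2 h.ge)
    rw [Iic_union_Ici] at this
    exact this.hasDerivAt univ_mem
  · exact (h2 h.le).hasDerivAt (Ici_mem_nhds h)

/-- The kernel `σ(s) σ(t) / d(s,t)²`. -/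
def kerB (S σ : ℝ → ℝ) (s t : ℝ) : ℝ :=
  1 / (min |S t - S s| ((S 1 - S 0) - |S t - S s|)) ^ 2 * (σ s * σ t)

lemma S_mono {S σ : ℝ → ℝ} (hS : ∀ x, HasDerivAt S (σ x) x) (_hσ : Continuous σ) (hpos : ∀ x, 0 < σ x)
    : StrictMono S :=
  strictMono_of_deriv_pos fun x => by rw [(hS x).deriv]; exact hpos x

lemma kerB_contOn {S σ : ℝ → ℝ} (hS : ∀ x, HasDerivAt S (σ x) x) (hσ : Continuous σ) (hpos : ∀ x, 0 < σ x)
    {s : ℝ} (h0 : 0 < s) (h1 : s < 1) {a b : ℝ} (ha : 0 ≤ a) (hab : a ≤ b)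
    (hb : b ≤ 1) (hs : s < a ∨ b < s) :
    IntervalIntegrable (kerB S σ s) volume a b := by
  apply ContinuousOn.intervalIntegrable
  rw [uIcc_of_le hab]
  have hSc : Continuous S := continuous_iff_continuousAt.2 fun x => (hS x).continuousAt
  have hm := S_mono hS hσ hpos
  unfold kerB
  apply ContinuousOn.mul _ (by fun_prop)
  apply ContinuousOn.div (by fun_prop) (by fun_prop)
  intro t ht
  have h2 := hm h0
  have h3 := hm h1
  have h5 : 0 < |S t - S s| := by
    rw [abs_pos, sub_ne_zero]
    apply hm.injective.ne
    rintro rfl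
    rcases hs with hs | hs
    · linarith [ht.1]
    · linarith [ht.2]
  have h6 : 0 < (S 1 - S 0) - |S t - S s| := by
    have h7 := hm.monotone (ha.trans ht.1)
    have h8 := hm.monotone (ht.2.trans hb)
    rw [sub_pos, abs_lt]
    constructor <;> linarith
  exact (pow_pos (lt_min h5 h6) 2).ne'

lemma kerB_cut {S σ : ℝ → ℝ} (hS : ∀ x, HasDerivAt S (σ x) x) (hσ : Continuous σ) (hpos : ∀ x, 0 < σ x)
    {s s₁ s₂ : ℝ} (h0 : 0 ≤ s₁) (h1 : s₁ < s) (h2 : s < s₂) (h3 : s₂ ≤ 1) :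
    (∫ t in (0:ℝ)..s₁, kerB S σ s t) + (∫ t in s₂..1, kerB S σ s t) =
      σ s * (-4 / (S 1 - S 0) - primP (S 1 - S 0) (S s - S s₁)
        - primP (S 1 - S 0) (S s₂ - S s)) := by
  have hm := S_mono hS hσ hpos
  have hs0 : 0 < s := by linarith
  have hs1 : s < 1 := by linarith
  have e1 := hm hs0
  have e2 := hm hs1
  set L := S 1 - S 0 with hL
  have A : (∫ t in (0:ℝ)..s₁, kerB S σ s t) =
      -σ s * primP L (S s - S s₁) - -σ s * primP L (S s - S 0) := by
    apply intervalIntegral.integral_eq_sub_of_hasDerivAt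
      (f := fun t => -σ s * primP L (S s - S t))
    · intro t ht
      rw [uIcc_of_le h0] at ht
      have e3 := hm.monotone ht.1
      have e4 := hm (lt_of_le_of_lt ht.2 h1)
      have := ((primP_hasDerivAt (L := L) (x := S s - S t) (by linarith) (by linarith)).comp t
        ((hS t).const_sub (S s))).const_mul (-σ s)
      convert! this using 1
      unfold kerB
      rw [abs_sub_comm, abs_of_pos (by linarith), ← hL]
      ring
    · exact kerB_contOn hS hσ hpos hs0 hs1 le_rfl h0 (by linarith) (Or.inr h1)
  have B : (∫ t in s₂..1, kerB S σ s t) =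
      σ s * primP L (S 1 - S s) - σ s * primP L (S s₂ - S s) := by
    apply intervalIntegral.integral_eq_sub_of_hasDerivAt
      (f := fun t => σ s * primP L (S t - S s))
    · intro t ht
      rw [uIcc_of_le h3] at ht
      have e3 := hm.monotone ht.2
      have e4 := hm (lt_of_lt_of_le h2 ht.1)
      have := ((primP_hasDerivAt (L := L) (x := S t - S s) (by linarith) (by linarith)).comp t
        ((hS t).sub_const (S s))).const_mul (σ s)
      convert! this using 1
      unfold kerB
      rw [abs_of_pos (by linarith), ← hL]
      ring
    · exact kerB_contOn hS hσ hpos hs0 hs1 (by linarith) h3 le_rfl (Or.inl h2)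
  rw [A, B]
  have := primP_add L (S s - S 0)
  rw [show L - (S s - S 0) = S 1 - S s by rw [hL]; ring] at this
  rw [← this]
  ring

lemma quot_tendsto {S σ : ℝ → ℝ} (hS : ∀ x, HasDerivAt S (σ x) x) (hσ : Continuous σ) (hpos : ∀ x, 0 < σ x)
    {s b : ℝ} (hb : HasDerivAt σ b s) :
    Tendsto (fun ε => σ s / (S (s + ε) - S s) - 1 / ε) (𝓝[≠] 0) (𝓝 (-(b / 2) * (σ s)⁻¹)) := by
  have hSc : Continuous S := continuous_iff_continuousAt.2 fun x => (hS x).continuousAt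
  have hm := S_mono hS hσ hpos
  have hsl : Tendsto (fun ε : ℝ => ε / (S (s + ε) - S s)) (𝓝[≠] 0) (𝓝 (σ s)⁻¹) := by
    have := (hasDerivAt_iff_tendsto_slope_zero.1 (hS s)).inv₀ (hpos s).ne'
    refine this.congr fun ε => ?_
    simp [div_eq_inv_mul, mul_comm]
  have hT : Tendsto (fun ε : ℝ => (S (s + ε) - S s - σ s * ε) / ε ^ 2) (𝓝[≠] 0) (𝓝 (b / 2)) := by
    apply HasDerivAt.lhopital_zero_nhdsNE (f' := fun ε => σ (s + ε) - σ s)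
      (g' := fun ε => 2 * ε)
    · refine Eventually.of_forall fun ε => ?_
      have h1 : HasDerivAt (fun ε => S (s + ε)) (σ (s + ε)) ε := (hS (s + ε)).comp_const_add s ε
      have := (h1.sub_const (S s)).sub ((hasDerivAt_id ε).const_mul (σ s))
      simpa using! this
    · refine Eventually.of_forall fun ε => ?_
      simpa using hasDerivAt_pow 2 ε
    · filter_upwards [self_mem_nhdsWithin] with ε hε
      simpa using hε
    · have : Continuous fun ε => S (s + ε) - S s - σ s * ε := by fun_prop
      simpa using (this.tendsto 0).mono_left nhdsWithin_le_nhds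
    · have : Continuous fun ε : ℝ => ε ^ 2 := by fun_prop
      simpa using (this.tendsto 0).mono_left nhdsWithin_le_nhds
    · have := (hasDerivAt_iff_tendsto_slope_zero.1 hb).div_const 2
      refine this.congr fun ε => ?_
      simp only [smul_eq_mul]
      rw [div_eq_mul_inv, div_eq_mul_inv, mul_inv]; ring
  refine (hT.neg.mul hsl).congr' ?_
  filter_upwards [self_mem_nhdsWithin] with ε hε
  have hε : ε ≠ 0 := hε
  have : S (s + ε) - S s ≠ 0 := by
    rw [sub_ne_zero]
    apply hm.injective.ne
    simpa using hε
  field_simp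
  ring

lemma kerB_tendsto {S σ : ℝ → ℝ} (hS : ∀ x, HasDerivAt S (σ x) x) (hσ : Continuous σ) (hpos : ∀ x, 0 < σ x)
    {s b : ℝ} (hb : HasDerivAt σ b s) (h0 : 0 < s) (h1 : s < 1) :
    Tendsto (fun ε => ((∫ t in (0:ℝ)..(s - ε), kerB S σ s t) +
      (∫ t in (s + ε)..1, kerB S σ s t)) - 2 / ε) (𝓝[>] 0) (𝓝 (σ s * (-4 / (S 1 - S 0)))) := by
  have hSc : Continuous S := continuous_iff_continuousAt.2 fun x => (hS x).continuousAt
  have hm := S_mono hS hσ hpos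
  have hL : 0 < S 1 - S 0 := by linarith [hm (zero_lt_one (α := ℝ))]
  have hq := quot_tendsto hS hσ hpos hb
  have q1 := hq.mono_left (nhdsGT_le_nhdsNE (0:ℝ))
  have hneg : Tendsto (fun ε : ℝ => -ε) (𝓝[>] 0) (𝓝[≠] 0) := by
    apply tendsto_nhdsWithin_of_tendsto_nhds_of_eventually_within
    · have : Continuous fun ε : ℝ => -ε := by fun_prop
      simpa using (this.tendsto 0).mono_left nhdsWithin_le_nhds
    · filter_upwards [self_mem_nhdsWithin] with ε hε
      simpa using (ne_of_gt hε)
  have q2 := hq.comp hneg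
  have q3 := (q1.sub q2).const_add (σ s * (-4 / (S 1 - S 0)))
  rw [sub_self, add_zero] at q3
  refine q3.congr' ?_
  have c1 : Tendsto (fun ε => S (s + ε) - S s) (𝓝[>] 0) (𝓝 0) := by
    have : Continuous fun ε => S (s + ε) - S s := by fun_prop
    simpa using (this.tendsto 0).mono_left nhdsWithin_le_nhds
  have c2 : Tendsto (fun ε => S s - S (s - ε)) (𝓝[>] 0) (𝓝 0) := by
    have : Continuous fun ε => S s - S (s - ε) := by fun_prop
    simpa using (this.tendsto 0).mono_left nhdsWithin_le_nhds
  have c3 : Ioo (0:ℝ) (min s (1 - s)) ∈ 𝓝[>] (0:ℝ) :=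
    Ioo_mem_nhdsGT (lt_min h0 (by linarith))
  filter_upwards [c1.eventually_le_const (half_pos hL), c2.eventually_le_const (half_pos hL), c3]
    with ε d1 d2 d3
  have d4 := d3.1
  have d5 := lt_min_iff.1 d3.2
  rw [kerB_cut hS hσ hpos (by linarith) (by linarith) (by linarith) (by linarith),
    primP_left d1, primP_left d2]
  simp only [Function.comp]
  rw [← sub_eq_add_neg]
  have g1 : S (s + ε) - S s ≠ 0 := by linarith [hm (show s < s + ε by linarith)]
  have g2 : S (s - ε) - S s ≠ 0 := by linarith [hm (show s - ε < s by linarith)]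
  have g3 : S s - S (s - ε) ≠ 0 := by linarith [hm (show s - ε < s by linarith)]
  rw [show S s - S (s - ε) = -(S (s - ε) - S s) by ring]
  field_simp
  ring

lemma kerB_diff {S σ S' σ' : ℝ → ℝ} (hS : ∀ x, HasDerivAt S (σ x) x) (hσ : Continuous σ)
    (hpos : ∀ x, 0 < σ x) (hS' : ∀ x, HasDerivAt S' (σ' x) x) (hσ' : Continuous σ')
    (hpos' : ∀ x, 0 < σ' x) {s b b' : ℝ} (hb : HasDerivAt σ b s) (hb' : HasDerivAt σ' b' s)
    (h0 : 0 < s) (h1 : s < 1)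
    (hint : IntervalIntegrable (fun t => kerB S σ s t - kerB S' σ' s t) volume 0 1) :
    ∫ t in (0:ℝ)..1, (kerB S σ s t - kerB S' σ' s t) =
      σ s * (-4 / (S 1 - S 0)) - σ' s * (-4 / (S' 1 - S' 0)) := by
  set F := fun t => kerB S σ s t - kerB S' σ' s t with hF
  have t1 := (kerB_tendsto hS hσ hpos hb h0 h1).sub (kerB_tendsto hS' hσ' hpos' hb' h0 h1)
  have hFi : ∀ a ∈ Icc (0:ℝ) 1, ∀ b ∈ Icc (0:ℝ) 1, IntervalIntegrable F volume a b := by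
    intro a ha b hb
    apply hint.mono_set
    rw [uIcc_of_le zero_le_one]
    exact uIcc_subset_Icc ha hb
  have hc : ContinuousOn (fun x => ∫ t in (0:ℝ)..x, F t) (Icc 0 1) := by
    have := intervalIntegral.continuousOn_primitive_interval' hint (left_mem_uIcc)
    rwa [uIcc_of_le zero_le_one] at this
  have hca : ContinuousAt (fun x => ∫ t in (0:ℝ)..x, F t) s :=
    hc.continuousAt (Icc_mem_nhds h0 h1)
  have l1 : Tendsto (fun ε : ℝ => s - ε) (𝓝[>] 0) (𝓝 s) := by
    have : Continuous fun ε : ℝ => s - ε := by fun_prop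
    simpa using (this.tendsto 0).mono_left nhdsWithin_le_nhds
  have l2 : Tendsto (fun ε : ℝ => s + ε) (𝓝[>] 0) (𝓝 s) := by
    have : Continuous fun ε : ℝ => s + ε := by fun_prop
    simpa using (this.tendsto 0).mono_left nhdsWithin_le_nhds
  have t2 := ((hca.tendsto.comp l1).sub (hca.tendsto.comp l2)).add_const (∫ t in (0:ℝ)..1, F t)
  rw [sub_self, zero_add] at t2
  refine tendsto_nhds_unique t2 (t1.congr' ?_)
  have c3 : Ioo (0:ℝ) (min s (1 - s)) ∈ 𝓝[>] (0:ℝ) :=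
    Ioo_mem_nhdsGT (lt_min h0 (by linarith))
  filter_upwards [c3] with ε d3
  have d4 := d3.1
  have d5 := lt_min_iff.1 d3.2
  simp only [Function.comp]
  have e1 : (∫ t in (0:ℝ)..(s - ε), F t) =
      (∫ t in (0:ℝ)..(s - ε), kerB S σ s t) - ∫ t in (0:ℝ)..(s - ε), kerB S' σ' s t :=
    intervalIntegral.integral_sub
      (kerB_contOn hS hσ hpos h0 h1 le_rfl (by linarith) (by linarith) (Or.inr (by linarith)))
      (kerB_contOn hS' hσ' hpos' h0 h1 le_rfl (by linarith) (by linarith) (Or.inr (by linarith)))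
  have e2 : (∫ t in (s + ε)..1, F t) =
      (∫ t in (s + ε)..1, kerB S σ s t) - ∫ t in (s + ε)..1, kerB S' σ' s t :=
    intervalIntegral.integral_sub
      (kerB_contOn hS hσ hpos h0 h1 (by linarith) (by linarith) le_rfl (Or.inl (by linarith)))
      (kerB_contOn hS' hσ' hpos' h0 h1 (by linarith) (by linarith) le_rfl (Or.inl (by linarith)))
  have e3 : (∫ t in (0:ℝ)..(s + ε), F t) + (∫ t in (s + ε)..1, F t) = ∫ t in (0:ℝ)..1, F t :=
    intervalIntegral.integral_add_adjacent_intervals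
      (hFi _ (by simp) _ ⟨by linarith, by linarith⟩) (hFi _ ⟨by linarith, by linarith⟩ _ (by simp))
  rw [← e3, e1, e2]
  ring

/-! ### Regular closed curves -/

/-- Arc length from the parameter `0`. -/
def arcS (γ : ℝ → E3) (x : ℝ) : ℝ := ∫ u in (0:ℝ)..x, ‖deriv γ u‖

lemma deriv_contDiff {γ : ℝ → E3} (hC2 : ContDiff ℝ 2 γ)
    : ContDiff ℝ 1 (deriv γ) := by
  have : ContDiff ℝ (1 + 1) γ := by simpa [one_add_one_eq_two] using hC2
  exact (contDiff_succ_iff_deriv.1 this).2.2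

lemma sig_cont {γ : ℝ → E3} (hC2 : ContDiff ℝ 2 γ)
    : Continuous fun x => ‖deriv γ x‖ := (deriv_contDiff hC2).continuous.norm

lemma arcS_hasDerivAt {γ : ℝ → E3} (hC2 : ContDiff ℝ 2 γ)
    (x : ℝ) : HasDerivAt (arcS γ) ‖deriv γ x‖ x :=
  intervalIntegral.integral_hasDerivAt_right ((sig_cont hC2).intervalIntegrable _ _)
    ((sig_cont hC2).stronglyMeasurableAtFilter _ _) (sig_cont hC2).continuousAt

lemma arcS_cont {γ : ℝ → E3} (hC2 : ContDiff ℝ 2 γ)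
    : Continuous (arcS γ) :=
  continuous_iff_continuousAt.2 fun x => (arcS_hasDerivAt hC2 x).continuousAt

lemma arcS_sub {γ : ℝ → E3} (hC2 : ContDiff ℝ 2 γ)
    (s t : ℝ) : ∫ u in s..t, ‖deriv γ u‖ = arcS γ t - arcS γ s :=
  (intervalIntegral.integral_interval_sub_left ((sig_cont hC2).intervalIntegrable _ _)
    ((sig_cont hC2).intervalIntegrable _ _)).symm

lemma dArc_eq {γ : ℝ → E3} (hC2 : ContDiff ℝ 2 γ)
    (s t : ℝ) : dArc γ s t =
    min |arcS γ t - arcS γ s| ((arcS γ 1 - arcS γ 0) - |arcS γ t - arcS γ s|) := by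
  unfold dArc arcLen
  rw [arcS_sub hC2, arcS_sub hC2]

lemma sig_differentiable {γ : ℝ → E3} (hC2 : ContDiff ℝ 2 γ)
    (hreg : ∀ s : ℝ, deriv γ s ≠ 0) :
    Differentiable ℝ fun x => ‖deriv γ x‖ :=
  ((deriv_contDiff hC2).norm ℝ hreg).differentiable one_ne_zero

lemma chord_le {γ : ℝ → E3} (hC2 : ContDiff ℝ 2 γ)
    {u v : ℝ} (huv : u ≤ v) : ‖γ u - γ v‖ ≤ arcS γ v - arcS γ u := by
  rw [← arcS_sub hC2, norm_sub_rev]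
  have : ∫ x in u..v, deriv γ x = γ v - γ u :=
    intervalIntegral.integral_deriv_eq_sub
      (fun x _ => (hC2.differentiable two_ne_zero) x)
      ((deriv_contDiff hC2).continuous.intervalIntegrable _ _)
  rw [← this]
  exact intervalIntegral.norm_integral_le_integral_norm huv

lemma chord_ge {γ : ℝ → E3} (hC2 : ContDiff ℝ 2 γ)
    (hreg : ∀ s : ℝ, deriv γ s ≠ 0) : ∃ K : ℝ, 0 < K ∧ ∀ u v : ℝ, 0 ≤ u → u ≤ v →
    v ≤ 2 → (1 - K ^ 2 * (v - u) ^ 2 / 2) * (arcS γ v - arcS γ u) ≤ ‖γ u - γ v‖ := by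
  have hd := deriv_contDiff hC2
  set T : ℝ → E3 := fun x => (‖deriv γ x‖)⁻¹ • deriv γ x with hT
  have hTc : ContDiff ℝ 1 T := ((hd.norm ℝ hreg).inv fun x => norm_ne_zero_iff.2 (hreg x)).smul hd
  have hT1 : ∀ x, ‖T x‖ = 1 := fun x => by
    rw [hT]; simp only [norm_smul, norm_inv, norm_norm]
    exact inv_mul_cancel₀ (norm_ne_zero_iff.2 (hreg x))
  obtain ⟨K, hK⟩ := (hTc.locallyLipschitz.locallyLipschitzOn
    (s := Icc (0:ℝ) 2)).exists_lipschitzOnWith_of_compact isCompact_Icc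
  refine ⟨K + 1, by positivity, fun u v hu huv hv => ?_⟩
  set a := 1 - ((K : ℝ) + 1) ^ 2 * (v - u) ^ 2 / 2 with ha
  have hmono : MonotoneOn (fun x => inner ℝ (T u) (γ x) - a * arcS γ x) (Icc u v) := by
    have hder : ∀ x, HasDerivAt (fun x => inner ℝ (T u) (γ x) - a * arcS γ x)
        (inner ℝ (T u) (deriv γ x) - a * ‖deriv γ x‖) x := by
      intro x
      have h1 : HasDerivAt γ (deriv γ x) x :=
        ((hC2.differentiable two_ne_zero) x).hasDerivAt
      have h2 := (hasDerivAt_const x (T u)).inner ℝ h1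
      simp only [inner_zero_left, add_zero] at h2
      exact h2.sub ((arcS_hasDerivAt hC2 x).const_mul a)
    apply monotoneOn_of_deriv_nonneg (convex_Icc u v)
    · exact fun x _ => (hder x).continuousAt.continuousWithinAt
    · exact fun x _ => (hder x).differentiableAt.differentiableWithinAt
    · intro x hx
      rw [interior_Icc] at hx
      rw [(hder x).deriv]
      have e1 : deriv γ x = ‖deriv γ x‖ • T x := by
        rw [hT]; simp only [smul_smul]
        rw [mul_inv_cancel₀ (norm_ne_zero_iff.2 (hreg x)), one_smul]
      have e2 : inner ℝ (T u) (deriv γ x) = ‖deriv γ x‖ * inner ℝ (T u) (T x) := by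
        conv_lhs => rw [e1]
        rw [inner_smul_right]
      have e3 : ‖T u - T x‖ ≤ (K + 1) * (v - u) := by
        have := hK.dist_le_mul u ⟨hu, by linarith⟩ x ⟨by linarith [hx.1], by linarith [hx.2]⟩
        rw [dist_eq_norm, Real.dist_eq, abs_sub_comm, abs_of_pos (by linarith [hx.1])] at this
        refine this.trans ?_
        apply mul_le_mul (by linarith) (by linarith [hx.2]) (by linarith [hx.1]) (by positivity)
      have e4 : ‖T u - T x‖ ^ 2 = 2 - 2 * inner ℝ (T u) (T x) := by
        rw [norm_sub_sq_real, hT1, hT1]; ring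
      have e5 : ‖T u - T x‖ ^ 2 ≤ ((K + 1) * (v - u)) ^ 2 :=
        pow_le_pow_left₀ (norm_nonneg _) e3 2
      have e6 : a ≤ inner ℝ (T u) (T x) := by
        rw [ha]; rw [mul_pow] at e5; linarith
      rw [e2]
      nlinarith [norm_nonneg (deriv γ x)]
  have := hmono (left_mem_Icc.2 huv) (right_mem_Icc.2 huv) huv
  simp only at this
  have e7 : inner ℝ (T u) (γ v - γ u) ≤ ‖γ u - γ v‖ := by
    have := real_inner_le_norm (T u) (γ v - γ u)
    rwa [hT1, one_mul, norm_sub_rev] at this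
  rw [inner_sub_right] at e7
  linarith

lemma arcS_period {γ : ℝ → E3} (hC2 : ContDiff ℝ 2 γ)
    (hper : Function.Periodic γ 1) (u : ℝ) :
    arcS γ (u + 1) - arcS γ u = arcS γ 1 - arcS γ 0 := by
  have hp : Function.Periodic (fun x => ‖deriv γ x‖) 1 := by
    intro x
    simp only
    rw [← deriv_comp_add_const]
    congr 2
    ext1 y
    exact hper y
  have := hp.intervalIntegral_add_eq u 0
  rw [arcS_sub hC2, arcS_sub hC2, zero_add] at this
  exact this

lemma arc_bound {γ : ℝ → E3} (hC2 : ContDiff ℝ 2 γ)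
    (hper : Function.Periodic γ 1)
    (hinj : ∀ s t : ℝ, γ s = γ t → ∃ n : ℤ, s - t = n)
    (hreg : ∀ s : ℝ, deriv γ s ≠ 0) :
    ∃ C : ℝ, 0 ≤ C ∧ ∀ u v : ℝ, 0 ≤ u → u ≤ 1 → u < v → v ≤ u + 1 →
      2 * (arcS γ v - arcS γ u) ≤ arcS γ 1 - arcS γ 0 →
      |1 / ‖γ u - γ v‖ ^ 2 - 1 / (arcS γ v - arcS γ u) ^ 2| ≤ C := by
  have hpos : ∀ x, 0 < ‖deriv γ x‖ := fun x => norm_pos_iff.2 (hreg x)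
  have hm := S_mono (arcS_hasDerivAt hC2) (sig_cont hC2) hpos
  have hSc := arcS_cont hC2
  obtain ⟨K, hK0, hK⟩ := chord_ge hC2 hreg
  obtain ⟨m, hm0, hmle⟩ := (isCompact_Icc (a := (0:ℝ)) (b := 2)).exists_forall_le'
    (sig_cont hC2).continuousOn (fun x _ => hpos x)
  have hL : 0 < arcS γ 1 - arcS γ 0 := by linarith [hm (zero_lt_one (α := ℝ))]
  set Q : Set (ℝ × ℝ) := (Icc 0 1 ×ˢ Icc 0 2) ∩ {p | p.1 + 1 / K ≤ p.2 ∧ p.2 ≤ p.1 + 1 ∧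
    2 * (arcS γ p.2 - arcS γ p.1) ≤ arcS γ 1 - arcS γ 0} with hQ
  have hQc : IsCompact Q := by
    apply (isCompact_Icc.prod isCompact_Icc).inter_right
    have q1 : IsClosed {p : ℝ × ℝ | p.1 + 1 / K ≤ p.2} :=
      isClosed_le (by fun_prop) (by fun_prop)
    have q2 : IsClosed {p : ℝ × ℝ | p.2 ≤ p.1 + 1} := isClosed_le (by fun_prop) (by fun_prop)
    have q3 : IsClosed {p : ℝ × ℝ | 2 * (arcS γ p.2 - arcS γ p.1) ≤ arcS γ 1 - arcS γ 0} :=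
      isClosed_le (by fun_prop) (by fun_prop)
    exact q1.inter (q2.inter q3)
  have hγc := hC2.continuous
  have hcont : ContinuousOn (fun p : ℝ × ℝ => ‖γ p.1 - γ p.2‖) Q := by fun_prop
  obtain ⟨c, hc0, hc⟩ := hQc.exists_forall_le' hcont (a := 0) (by
    rintro ⟨u, v⟩ ⟨-, h1, h2, h3⟩
    simp only at h1 h2 h3 ⊢
    rw [norm_pos_iff, sub_ne_zero]
    intro heq
    obtain ⟨n, hn⟩ := hinj v u heq.symm
    have hk : 0 < 1 / K := by positivity
    have n1 : (0:ℝ) < n := by linarith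
    have n2 : (n:ℝ) ≤ 1 := by linarith
    have n3 : n = 1 := by
      have : 0 < n := by exact_mod_cast n1
      have : n ≤ 1 := by exact_mod_cast n2
      omega
    rw [n3] at hn
    have : v = u + 1 := by push_cast at hn; linarith
    rw [this, arcS_period hC2 hper] at h3
    linarith)
  refine ⟨4 * K ^ 2 / m ^ 2 + 1 / c ^ 2, by positivity, fun u v hu hu1 huv hv h2 => ?_⟩
  have hle := chord_le hC2 huv.le
  set x := ‖γ u - γ v‖ with hx
  set l := arcS γ v - arcS γ u with hl
  have hl0 : 0 < l := by linarith [hm huv]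
  have hx0 : 0 ≤ x := norm_nonneg _
  rcases le_total (1 / K) (v - u) with h | h
  · have := hc (u, v) ⟨⟨⟨hu, hu1⟩, ⟨by linarith, by linarith⟩⟩,
      by simp only; linarith, hv, h2⟩
    simp only at this
    have i1 : 1 / x ^ 2 ≤ 1 / c ^ 2 := by gcongr
    have i2 : 1 / l ^ 2 ≤ 1 / x ^ 2 := by
      have : 0 < x := by linarith
      gcongr
    have i3 : 0 ≤ 1 / l ^ 2 := by positivity
    have i4 : 0 ≤ 4 * K ^ 2 / m ^ 2 := by positivity
    rw [abs_of_nonneg (by linarith)]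
    linarith
  · have j1 := hK u v hu huv.le (by linarith)
    rw [← hx, ← hl] at j1
    set h' := v - u with hh
    have h0 : 0 < h' := by linarith
    have j2 : K * h' ≤ 1 := by
      rw [le_div_iff₀ hK0] at h; linarith
    have j3 : K ^ 2 * h' ^ 2 ≤ 1 := by
      rw [← mul_pow]; exact pow_le_one₀ (by positivity) j2
    have j4 : l / 2 ≤ x := by nlinarith
    have hxp : 0 < x := by linarith
    have j5 : m * h' ≤ l := by
      have hmon : MonotoneOn (fun y => arcS γ y - m * y) (Icc u v) := by
        have hder : ∀ y, HasDerivAt (fun y => arcS γ y - m * y) (‖deriv γ y‖ - m) y := by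
          intro y
          simpa using! (arcS_hasDerivAt hC2 y).sub ((hasDerivAt_id y).const_mul m)
        apply monotoneOn_of_deriv_nonneg (convex_Icc u v)
        · exact fun x _ => (hder x).continuousAt.continuousWithinAt
        · exact fun x _ => (hder x).differentiableAt.differentiableWithinAt
        · intro y hy
          rw [interior_Icc] at hy
          rw [(hder y).deriv]
          linarith [hmle y ⟨by linarith [hy.1], by linarith [hy.2]⟩]
      have := hmon (left_mem_Icc.2 huv.le) (right_mem_Icc.2 huv.le) huv.le
      simp only at this
      rw [hl, hh]; linarith
    have i2 : 1 / l ^ 2 ≤ 1 / x ^ 2 := by gcongr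
    rw [abs_of_nonneg (by linarith)]
    have i5 : 1 / x ^ 2 - 1 / l ^ 2 ≤ 4 * K ^ 2 / m ^ 2 := by
      have k1 : 1 / x ^ 2 - 1 / l ^ 2 = (l - x) * (l + x) / (x ^ 2 * l ^ 2) := by
        field_simp; ring
      have k2 : (l - x) * (l + x) ≤ K ^ 2 * h' ^ 2 * l ^ 2 := by
        have : l - x ≤ K ^ 2 * h' ^ 2 * l / 2 := by nlinarith
        have k3 : (l - x) * (l + x) ≤ (K ^ 2 * h' ^ 2 * l / 2) * (2 * l) := by
          apply mul_le_mul this (by linarith) (by linarith) (by positivity)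
        linarith
      rw [k1, div_le_div_iff₀ (by positivity) (by positivity)]
      have k4 : (m * h') ^ 2 ≤ l ^ 2 := by gcongr
      have k5 : l ^ 2 ≤ 4 * x ^ 2 := by nlinarith
      calc (l - x) * (l + x) * m ^ 2 ≤ K ^ 2 * h' ^ 2 * l ^ 2 * m ^ 2 := by gcongr
        _ = K ^ 2 * l ^ 2 * (m * h') ^ 2 := by ring
        _ ≤ K ^ 2 * l ^ 2 * l ^ 2 := by gcongr
        _ ≤ K ^ 2 * l ^ 2 * (4 * x ^ 2) := by gcongr
        _ = _ := by ring
    have i6 : 0 ≤ 1 / c ^ 2 := by positivity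
    linarith

lemma dArc_symm {γ : ℝ → E3} (hC2 : ContDiff ℝ 2 γ)
    (s t : ℝ) : dArc γ s t = dArc γ t s := by
  rw [dArc_eq hC2, dArc_eq hC2, abs_sub_comm]

lemma energy_bound {γ : ℝ → E3} (hC2 : ContDiff ℝ 2 γ)
    (hper : Function.Periodic γ 1)
    (hinj : ∀ s t : ℝ, γ s = γ t → ∃ n : ℤ, s - t = n)
    (hreg : ∀ s : ℝ, deriv γ s ≠ 0) :
    ∃ C : ℝ, 0 ≤ C ∧ ∀ s t : ℝ, s ∈ Icc (0:ℝ) 1 → t ∈ Icc (0:ℝ) 1 →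
      |1 / ‖γ s - γ t‖ ^ 2 - 1 / dArc γ s t ^ 2| ≤ C := by
  obtain ⟨C, hC0, hC⟩ := arc_bound hC2 hper hinj hreg
  have hpos : ∀ x, 0 < ‖deriv γ x‖ := fun x => norm_pos_iff.2 (hreg x)
  have hm := S_mono (arcS_hasDerivAt hC2) (sig_cont hC2) hpos
  have key : ∀ s t : ℝ, s ∈ Icc (0:ℝ) 1 → t ∈ Icc (0:ℝ) 1 → s ≤ t →
      |1 / ‖γ s - γ t‖ ^ 2 - 1 / dArc γ s t ^ 2| ≤ C := by
    intro s t hs ht hst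
    have hL : 0 < arcS γ 1 - arcS γ 0 := by linarith [hm (zero_lt_one (α := ℝ))]
    rcases hst.eq_or_lt with rfl | hlt
    · rw [dArc_eq hC2]
      simp [min_eq_left hL.le, hC0]
    have hl := hm hlt
    rw [dArc_eq hC2, abs_of_pos (sub_pos.2 hl)]
    rcases le_total (arcS γ t - arcS γ s) ((arcS γ 1 - arcS γ 0) - (arcS γ t - arcS γ s))
      with h | h
    · rw [min_eq_left h]
      exact hC s t hs.1 hs.2 hlt (by linarith [ht.2, hs.1]) (by linarith)
    · rw [min_eq_right h]
      have hp := arcS_period hC2 hper s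
      have e : (arcS γ 1 - arcS γ 0) - (arcS γ t - arcS γ s) = arcS γ (s + 1) - arcS γ t := by
        linarith
      rw [e] at h ⊢
      rw [norm_sub_rev, ← hper s]
      rcases (show t ≤ s + 1 by linarith [ht.2, hs.1]).eq_or_lt with heq | hlt'
      · rw [← heq]; simp [hC0]
      · exact hC t (s + 1) ht.1 ht.2 hlt' (by linarith) (by linarith)
  refine ⟨C, hC0, fun s t hs ht => ?_⟩
  rcases le_total s t with h | h
  · exact key s t hs ht h
  · rw [norm_sub_rev, dArc_symm hC2]
    exact key t s ht hs h

/-- The energy integrand. -/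
def energyIntegrand (γ : ℝ → E3) (p : ℝ × ℝ) : ℝ :=
  (1 / ‖γ p.1 - γ p.2‖ ^ 2 - 1 / dArc γ p.1 p.2 ^ 2) * (‖deriv γ p.1‖ * ‖deriv γ p.2‖)

lemma energy_integrable {γ : ℝ → E3} (hC2 : ContDiff ℝ 2 γ)
    (hper : Function.Periodic γ 1)
    (hinj : ∀ s t : ℝ, γ s = γ t → ∃ n : ℤ, s - t = n)
    (hreg : ∀ s : ℝ, deriv γ s ≠ 0) :
    IntegrableOn (energyIntegrand γ) (Icc (0:ℝ) 1 ×ˢ Icc (0:ℝ) 1) := by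
  obtain ⟨C, hC0, hC⟩ := energy_bound hC2 hper hinj hreg
  obtain ⟨M, hM⟩ := (isCompact_Icc (a := (0:ℝ)) (b := 1)).exists_bound_of_continuousOn
    (sig_cont hC2).continuousOn
  have hγc := hC2.continuous
  have hSc := arcS_cont hC2
  have hσc := sig_cont hC2
  have hmeas : Measurable (energyIntegrand γ) := by
    unfold energyIntegrand
    simp only [dArc_eq hC2]
    have m1 : Measurable fun p : ℝ × ℝ => ‖γ p.1 - γ p.2‖ := by
      apply Continuous.measurable; fun_prop
    have m2 : Measurable fun p : ℝ × ℝ => min |arcS γ p.2 - arcS γ p.1|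
        ((arcS γ 1 - arcS γ 0) - |arcS γ p.2 - arcS γ p.1|) := by
      apply Continuous.measurable; fun_prop
    have m3 : Measurable fun p : ℝ × ℝ => ‖deriv γ p.1‖ * ‖deriv γ p.2‖ := by
      have hdc := (deriv_contDiff hC2).continuous
      apply Continuous.measurable; fun_prop
    exact (((m1.pow_const 2).const_div 1).sub ((m2.pow_const 2).const_div 1)).mul m3
  refine Measure.integrableOn_of_bounded (M := C * (M * M)) ?_ hmeas.aestronglyMeasurable ?_
  · exact (isCompact_Icc.prod isCompact_Icc).measure_lt_top.ne
  · refine (ae_restrict_iff' (measurableSet_Icc.prod measurableSet_Icc)).2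
      (Eventually.of_forall fun p hp => ?_)
    unfold energyIntegrand
    have b1 := hM p.1 hp.1
    have b2 := hM p.2 hp.2
    rw [norm_norm] at b1 b2
    rw [norm_mul, norm_mul, norm_norm, norm_norm, Real.norm_eq_abs]
    have := hC p.1 p.2 hp.1 hp.2
    have hM0 : 0 ≤ M := (norm_nonneg _).trans b1
    gcongr

/-! ### The inversion -/

lemma inv3_eq (c : E3) (r : ℝ) : inv3 c r = EuclideanGeometry.inversion c r := by
  ext1 x
  simp [inv3, EuclideanGeometry.inversion, dist_eq_norm, div_pow, add_comm]

/-- Möbius invariance of the energy `E⁽²⁾` (Freedman–He–Wang): the energy is unchanged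
under inversion in a sphere whose center does not lie on the knot. -/
theorem energy_inversion_invariant (γ : ℝ → E3)
    (hC2 : ContDiff ℝ 2 γ)
    (hper : Function.Periodic γ 1)
    (hinj : ∀ s t : ℝ, γ s = γ t → ∃ n : ℤ, s - t = n)
    (hreg : ∀ s : ℝ, deriv γ s ≠ 0)
    (c : E3) (hc : c ∉ Set.range γ) (r : ℝ) (hr : 0 < r) :
    energy (inv3 c r ∘ γ) = energy γ := by
  have hne : ∀ x, γ x ≠ c := fun x h => hc ⟨x, h⟩
  set η := inv3 c r ∘ γ with hη
  have hηx : ∀ x, η x = EuclideanGeometry.inversion c r (γ x) := fun x => by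
    rw [hη, inv3_eq]; rfl
  have kC2 : ContDiff ℝ 2 η := by
    have : ContDiff ℝ 2 (fun x => EuclideanGeometry.inversion c r (γ x)) :=
      contDiff_const.inversion contDiff_const hC2 hne
    rwa [← funext hηx] at this
  have kper : Function.Periodic η 1 := fun x => by rw [hηx, hηx, hper x]
  have kinj : ∀ s t : ℝ, η s = η t → ∃ n : ℤ, s - t = n := fun s t h => by
    rw [hηx, hηx] at h
    exact hinj s t (EuclideanGeometry.inversion_injective c hr.ne' h)
  have knorm : ∀ x, ‖deriv η x‖ = (r / dist (γ x) c) ^ 2 * ‖deriv γ x‖ := fun x => by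
    have h1 : HasDerivAt γ (deriv γ x) x := ((hC2.differentiable two_ne_zero) x).hasDerivAt
    have h2 := (EuclideanGeometry.hasFDerivAt_inversion (R := r) (hne x)).comp_hasDerivAt x h1
    have h3 : η = EuclideanGeometry.inversion c r ∘ γ := funext hηx
    rw [h3, h2.deriv]
    simp [norm_smul, abs_of_pos hr]
  have kreg : ∀ x, deriv η x ≠ 0 := fun x => by
    rw [← norm_pos_iff, knorm]
    have := dist_pos.2 (hne x)
    have := norm_pos_iff.2 (hreg x)
    positivity
  have hchord : ∀ s t, 1 / ‖η s - η t‖ ^ 2 * (‖deriv η s‖ * ‖deriv η t‖) =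
      1 / ‖γ s - γ t‖ ^ 2 * (‖deriv γ s‖ * ‖deriv γ t‖) := fun s t => by
    rw [knorm, knorm, ← dist_eq_norm, hηx, hηx,
      EuclideanGeometry.dist_inversion_inversion (hne s) (hne t), ← dist_eq_norm]
    have h1 := (dist_pos.2 (hne s)).ne'
    have h2 := (dist_pos.2 (hne t)).ne'
    rcases eq_or_ne (dist (γ s) (γ t)) 0 with h | h
    · simp [h]
    · field_simp
  have i1 := energy_integrable hC2 hper hinj hreg
  have i2 := energy_integrable kC2 kper kinj kreg
  set B : ℝ × ℝ → ℝ := fun p => kerB (arcS γ) (fun x => ‖deriv γ x‖) p.1 p.2 -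
    kerB (arcS η) (fun x => ‖deriv η x‖) p.1 p.2 with hB
  have hBe : ∀ p, energyIntegrand η p - energyIntegrand γ p = B p := fun p => by
    have := hchord p.1 p.2
    simp only [energyIntegrand, hB, kerB, dArc_eq hC2, dArc_eq kC2]
    linear_combination this
  have iB : IntegrableOn B (Icc (0:ℝ) 1 ×ˢ Icc (0:ℝ) 1) := by
    have := i2.sub i1
    rwa [funext (fun p => (hBe p).symm)]
  rw [← sub_eq_zero]
  have hE : energy η - energy γ = ∫ p in Icc (0:ℝ) 1 ×ˢ Icc (0:ℝ) 1, B p := by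
    rw [← funext hBe]
    exact (integral_sub i2 i1).symm
  rw [hE, Measure.volume_eq_prod, setIntegral_prod B (by rwa [Measure.volume_eq_prod] at iB)]
  rw [IntegrableOn, Measure.volume_eq_prod, ← Measure.prod_restrict] at iB
  have hsec := iB.prod_right_ae
  set σ := fun x => ‖deriv γ x‖ with hσ
  set τ := fun x => ‖deriv η x‖ with hτ
  have inner_eq : ∀ᵐ s ∂(volume.restrict (Icc (0:ℝ) 1)), (∫ t in Icc (0:ℝ) 1, B (s, t)) =
      σ s * (-4 / (arcS γ 1 - arcS γ 0)) - τ s * (-4 / (arcS η 1 - arcS η 0)) := by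
    have hmem : ∀ᵐ s ∂(volume.restrict (Icc (0:ℝ) 1)), s ∈ Ioo (0:ℝ) 1 := by
      rw [← restrict_Ioo_eq_restrict_Icc]
      exact ae_restrict_mem measurableSet_Ioo
    filter_upwards [hsec, hmem] with s hs hs'
    have hs2 : IntervalIntegrable (fun t => kerB (arcS γ) σ s t - kerB (arcS η) τ s t)
        volume 0 1 := by
      rw [intervalIntegrable_iff_integrableOn_Icc_of_le zero_le_one]
      exact hs
    have := kerB_diff (arcS_hasDerivAt hC2) (sig_cont hC2) (fun x => norm_pos_iff.2 (hreg x))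
      (arcS_hasDerivAt kC2) (sig_cont kC2) (fun x => norm_pos_iff.2 (kreg x))
      (sig_differentiable hC2 hreg s).hasDerivAt (sig_differentiable kC2 kreg s).hasDerivAt
      hs'.1 hs'.2 hs2
    rw [intervalIntegral.integral_of_le zero_le_one, ← integral_Icc_eq_integral_Ioc] at this
    exact this
  rw [integral_congr_ae inner_eq, integral_Icc_eq_integral_Ioc,
    ← intervalIntegral.integral_of_le zero_le_one, intervalIntegral.integral_sub,
    intervalIntegral.integral_mul_const, intervalIntegral.integral_mul_const,
    arcS_sub hC2, arcS_sub kC2]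
  · have l1 := S_mono (arcS_hasDerivAt hC2) (sig_cont hC2) (fun x => norm_pos_iff.2 (hreg x))
      (zero_lt_one (α := ℝ))
    have l2 := S_mono (arcS_hasDerivAt kC2) (sig_cont kC2) (fun x => norm_pos_iff.2 (kreg x))
      (zero_lt_one (α := ℝ))
    rw [mul_div_cancel₀ _ (by linarith), mul_div_cancel₀ _ (by linarith), sub_self]
  · exact ((sig_cont hC2).mul continuous_const).intervalIntegrable _ _
  · exact ((sig_cont kC2).mul continuous_const).intervalIntegrable _ _
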